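/- Let p ∈ (1,∞), T ∈ (0,∞), u_0 ∈ L_p(ℝ^d), and f ∈ L_p((0,T); L_p(ℝ^d)). Assume additionally that ∫_0^T |a(t)| dt < ∞. Then there exists a unique weak solution u of ∂_t u = a^{ij}(t) u_{x^i x^j} + f, u(0) = u_0, which is continuous from [0,T] into L_p(ℝ^d), and this solution satisfies sup_{t∈[0,T]} ‖u(t,·)‖_{L_p}^p ≤ N ( ‖u_0‖_{L_p}^p + ∫_0^T ‖f(t,·)‖_{L_p}^p dt ), where N depends only on p and T. -/

import Mathlib

open MeasureTheory Set ENNReal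

noncomputable section

/-- The partial derivative `∂_{x^i} φ` of a function on `ℝ^d`. -/
def pd {d : ℕ} (i : Fin d) (φ : (Fin d → ℝ) → ℝ) : (Fin d → ℝ) → ℝ :=
  fun x => fderiv ℝ φ x (Pi.single i 1)

/-- `|a(t)| = max_{i,j} |a^{ij}(t)|`. -/
def aMax {d : ℕ} (a : ℝ → Fin d → Fin d → ℝ) (t : ℝ) : ℝ :=
  ⨆ i, ⨆ j, |a t i j|

/-- `u` is a weak solution of `∂_t u = a^{ij}(t) u_{x^i x^j} + f`, `u(0) = u₀`, on `[0,T]`. -/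
def IsWeakSolution {d : ℕ} (p : ℝ≥0∞) (T : ℝ) (a : ℝ → Fin d → Fin d → ℝ)
    (u0 : Lp ℝ p (volume : Measure (Fin d → ℝ)))
    (f u : ℝ → Lp ℝ p (volume : Measure (Fin d → ℝ))) : Prop :=
  ∀ φ : (Fin d → ℝ) → ℝ, ContDiff ℝ (⊤ : ℕ∞) φ → HasCompactSupport φ →
    ∀ t ∈ Icc (0:ℝ) T,
      (∫ x, u t x * φ x) =
        (∫ x, u0 x * φ x) +
        ∫ s in Ioc (0:ℝ) t,
          ((∑ i, ∑ j, a s i j * ∫ x, u s x * pd i (pd j φ) x)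
            + ∫ x, f s x * φ x)

/-!
Write `U(s, t) = exp((∫_s^t a^{ij} dr) ∂_i ∂_j)`. On `L^p` this is convolution with the centred
Gaussian law of covariance `2 ∫_s^t A dr`, hence an average of translations: a contraction,
however degenerate `A` is. Duhamel's formula `u(t) = U(0, t) u₀ + ∫_0^t U(r, t) f(r) dr` then gives
a continuous function with `‖u(t)‖ ≤ ‖u₀‖ + ∫_0^T ‖f‖`, and Jensen's inequality in time turns this
into the estimate for `p`-th powers.

Since `A` is merely integrable in time, nothing can be differentiated in `t`. Instead, a function
`g` is shown to be constant by proving `|g(t) - g(s)| ≤ C η ∫_s^t κ` with `κ` integrable and `η`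
arbitrarily small once `t - s` is small. The input is a third order Taylor expansion of translations
against a test function `φ`, which together with the Gaussian moments yields
`⟨U(s, t) z, φ⟩ = ⟨z, φ⟩ + ⟨z, (∫_s^t a^{ij}) ∂_i ∂_j φ⟩ + O(|∫_s^t A|^{3/2})`.
With `g(t) = ⟨u(t), φ⟩ - ∫_0^t (⟨u, a^{ij} ∂_i ∂_j φ⟩ + ⟨f, φ⟩)` this shows that `u` is a weak
solution. With `g(s) = ⟨U(s, t) x(s), φ⟩` it shows that `x(t) = U(0, t) x(0)` for every continuous
solution `x` of the homogeneous equation, whence uniqueness; here the expansion is needed for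
`U(r, t)* φ` in place of `φ`, and it is obtained by averaging over the translates of `x`, which
are again solutions.
-/

namespace DegenerateParabolic

open ProbabilityTheory
open scoped Distributions LineDeriv Matrix Matrix.Norms.L2Operator MatrixOrder Topology

section Analysis

variable {E : Type*} [NormedAddCommGroup E]

theorem norm_sub_le_of_forall_norm_sub_le_mul_intervalIntegral {g : ℝ → E} {κ : ℝ → ℝ} {C T δ : ℝ}
    (hT : 0 ≤ T) (hδ : 0 < δ) (hκ : Integrable κ)
    (h : ∀ s t, 0 ≤ s → s ≤ t → t ≤ T → t - s < δ → ‖g t - g s‖ ≤ C * ∫ r in s..t, κ r) :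
    ‖g T - g 0‖ ≤ C * ∫ r in 0..T, κ r := by
  obtain ⟨n, hn⟩ := exists_nat_gt (T / δ)
  have hn0 : (0 : ℝ) < n := (by positivity : 0 ≤ T / δ).trans_lt hn
  set x : ℕ → ℝ := fun k => k * (T / n)
  have hx0 : x 0 = 0 := by simp [x]
  have hxn : x n = T := mul_div_cancel₀ T hn0.ne'
  have hx_nonneg : ∀ k, 0 ≤ x k := fun k => by positivity
  have hx_step : ∀ k, x (k + 1) - x k = T / n := fun k => by simp only [x]; push_cast; ring
  have hx_le : ∀ k < n, x (k + 1) ≤ T := fun k hk => by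
    rw [← hxn]; simp only [x]; gcongr; exact hk
  calc ‖g T - g 0‖ = ‖∑ k ∈ Finset.range n, (g (x (k + 1)) - g (x k))‖ := by
        rw [Finset.sum_range_sub fun k => g (x k), hxn, hx0]
    _ ≤ ∑ k ∈ Finset.range n, C * ∫ r in x k..x (k + 1), κ r :=
        norm_sum_le_of_le _ fun k hk => h _ _ (hx_nonneg k)
          (sub_nonneg.1 (by rw [hx_step]; positivity)) (hx_le k (Finset.mem_range.1 hk))
          (by rw [hx_step]; exact (div_lt_comm₀ hn0 hδ).2 hn)
    _ = C * ∫ r in 0..T, κ r := by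
        rw [← Finset.mul_sum, intervalIntegral.sum_integral_adjacent_intervals
          fun k _ => hκ.intervalIntegrable, hx0, hxn]

theorem eq_of_forall_norm_sub_le_mul_intervalIntegral {g : ℝ → E} {κ : ℝ → ℝ} {C T : ℝ}
    (hT : 0 ≤ T) (hκ : Integrable κ)
    (h : ∀ η > 0, ∃ δ > 0, ∀ s t, 0 ≤ s → s ≤ t → t ≤ T → t - s < δ →
      ‖g t - g s‖ ≤ C * η * ∫ r in s..t, κ r) :
    g T = g 0 := by
  have hbound : ∀ η > 0, ‖g T - g 0‖ ≤ C * η * ∫ r in 0..T, κ r := fun η hη => by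
    obtain ⟨δ, hδ, h⟩ := h η hη
    exact norm_sub_le_of_forall_norm_sub_le_mul_intervalIntegral hT hδ hκ h
  have hlim : Filter.Tendsto (fun η : ℝ => C * η * ∫ r in 0..T, κ r) (𝓝[>] 0) (𝓝 0) := by
    have hcont : Continuous fun η : ℝ => C * η * ∫ r in 0..T, κ r := by fun_prop
    simpa using (hcont.tendsto 0).mono_left nhdsWithin_le_nhds
  exact sub_eq_zero.1 <| norm_le_zero_iff.1 <|
    ge_of_tendsto hlim (Filter.mem_of_superset self_mem_nhdsWithin hbound)

theorem exists_pos_forall_norm_sub_le_and_intervalIntegral_le {x : ℝ → E} {κ : ℝ → ℝ} {T : ℝ}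
    (hx : ContinuousOn x (Icc 0 T)) (hκ : Integrable κ) {η ε : ℝ} (hη : 0 < η) (hε : 0 < ε) :
    ∃ δ > 0, ∀ s t, 0 ≤ s → s ≤ t → t ≤ T → t - s < δ →
      (∀ r ∈ Icc s t, ‖x r - x s‖ ≤ η) ∧ ∫ r in s..t, κ r ≤ ε := by
  have hprim : Continuous fun t => ∫ r in 0..t, κ r :=
    intervalIntegral.continuous_primitive (fun _ _ => hκ.intervalIntegrable) 0
  obtain ⟨δ₁, hδ₁, h₁⟩ := Metric.uniformContinuousOn_iff_le.1
    (isCompact_Icc.uniformContinuousOn_of_continuous hx) η hη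
  obtain ⟨δ₂, hδ₂, h₂⟩ := Metric.uniformContinuousOn_iff_le.1
    (isCompact_Icc.uniformContinuousOn_of_continuous hprim.continuousOn (s := Icc 0 T)) ε hε
  refine ⟨min δ₁ δ₂, lt_min hδ₁ hδ₂, fun s t hs hst ht hδ => ⟨fun r hr => ?_, ?_⟩⟩
  · have hrs : dist r s ≤ δ₁ := by
      rw [Real.dist_eq, abs_of_nonneg (sub_nonneg.2 hr.1)]
      linarith [hr.2, min_le_left δ₁ δ₂]
    simpa [dist_eq_norm] using
      h₁ r ⟨hs.trans hr.1, hr.2.trans ht⟩ s ⟨hs, hst.trans ht⟩ hrs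
  · have hts : dist t s ≤ δ₂ := by
      rw [Real.dist_eq, abs_of_nonneg (sub_nonneg.2 hst)]
      linarith [min_le_right δ₁ δ₂]
    have := h₂ t ⟨hs.trans hst, ht⟩ s ⟨hs, hst.trans ht⟩ hts
    rw [Real.dist_eq, intervalIntegral.integral_interval_sub_left hκ.intervalIntegrable
      hκ.intervalIntegrable] at this
    exact (le_abs_self _).trans this

theorem continuous_setIntegral_Ioc [NormedSpace ℝ E] {g : ℝ → E} (hg : Integrable g) :
    Continuous fun w : ℝ × ℝ => ∫ r in Ioc w.1 w.2, g r := by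
  have heq : ∀ w : ℝ × ℝ, ∫ r in Ioc w.1 w.2, g r =
      (∫ r in 0..w.2, g r) - ∫ r in 0..min w.1 w.2, g r := fun w => by
    rw [intervalIntegral.integral_interval_sub_left hg.intervalIntegrable hg.intervalIntegrable,
      intervalIntegral.integral_of_le (min_le_right _ _)]
    rcases le_total w.1 w.2 with h | h <;> simp [h]
  have hprim : Continuous fun t => ∫ r in 0..t, g r :=
    intervalIntegral.continuous_primitive (fun _ _ => hg.intervalIntegrable) 0
  simp only [heq]
  exact (hprim.comp continuous_snd).sub (hprim.comp (continuous_fst.min continuous_snd))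

theorem norm_setIntegral_Ioc_le [NormedSpace ℝ E] (g : ℝ → E) {s t : ℝ} (hst : s ≤ t) :
    ‖∫ r in Ioc s t, g r‖ ≤ ∫ r in s..t, ‖g r‖ := by
  rw [← intervalIntegral.integral_of_le hst]
  exact intervalIntegral.norm_integral_le_integral_norm hst

end Analysis

section RpowEstimate

variable {α E : Type*} [MeasurableSpace α] {μ : Measure α} [IsFiniteMeasure μ]
  [NormedAddCommGroup E] {q : ℝ} {f : α → E}

theorem integrable_of_integrable_norm_rpow (hq : 1 ≤ q) (hf : AEStronglyMeasurable f μ)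
    (hfq : Integrable (fun r => ‖f r‖ ^ q) μ) : Integrable f μ := by
  have hq₀ : 0 < q := zero_lt_one.trans_le hq
  refine ((integrable_norm_rpow_iff (p := ENNReal.ofReal q) hf (by simpa) ofReal_ne_top).1
    ?_).integrable (by simpa using hq)
  rwa [ENNReal.toReal_ofReal hq₀.le]

theorem integral_norm_rpow_le (hq : 1 ≤ q) (hf : AEStronglyMeasurable f μ)
    (hfq : Integrable (fun r => ‖f r‖ ^ q) μ) :
    (∫ r, ‖f r‖ ∂μ) ^ q ≤ μ.real univ ^ (q - 1) * ∫ r, ‖f r‖ ^ q ∂μ := by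
  rcases eq_zero_or_neZero μ with rfl | _
  · simp [(zero_lt_one.trans_le hq).ne']
  have hμ : 0 < μ.real univ := measureReal_univ_pos
  have havg : (⨍ r, ‖f r‖ ∂μ) ^ q ≤ ⨍ r, ‖f r‖ ^ q ∂μ :=
    (convexOn_rpow hq).map_average_le
      (continuousOn_id.rpow_const fun x _ => .inr (zero_le_one.trans hq)) isClosed_Ici
      (.of_forall fun r => norm_nonneg _) (integrable_of_integrable_norm_rpow hq hf hfq).norm hfq
  rw [average_eq, average_eq, smul_eq_mul, smul_eq_mul, inv_mul_eq_div,
    Real.div_rpow (integral_nonneg fun r => norm_nonneg _) hμ.le,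
    div_le_iff₀ (by positivity)] at havg
  refine havg.trans_eq ?_
  rw [Real.rpow_sub_one hμ.ne']
  ring

theorem add_integral_norm_rpow_le (hq : 1 ≤ q) (hf : AEStronglyMeasurable f μ)
    (hfq : Integrable (fun r => ‖f r‖ ^ q) μ) {x : ℝ} (hx : 0 ≤ x) :
    (x + ∫ r, ‖f r‖ ∂μ) ^ q ≤
      2 ^ (q - 1) * max 1 (μ.real univ ^ (q - 1)) * (x ^ q + ∫ r, ‖f r‖ ^ q ∂μ) := by
  have hadd {y : ℝ} (hy : 0 ≤ y) : (x + y) ^ q ≤ 2 ^ (q - 1) * (x ^ q + y ^ q) := by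
    lift x to NNReal using hx
    lift y to NNReal using hy
    exact_mod_cast NNReal.rpow_add_le_mul_rpow_add_rpow x y hq
  calc (x + ∫ r, ‖f r‖ ∂μ) ^ q ≤ 2 ^ (q - 1) * (x ^ q + (∫ r, ‖f r‖ ∂μ) ^ q) :=
        hadd (integral_nonneg fun r => norm_nonneg _)
    _ ≤ 2 ^ (q - 1) * (1 * x ^ q + μ.real univ ^ (q - 1) * ∫ r, ‖f r‖ ^ q ∂μ) := by
        rw [one_mul]
        gcongr
        exact integral_norm_rpow_le hq hf hfq
    _ ≤ 2 ^ (q - 1) * (max 1 (μ.real univ ^ (q - 1)) * x ^ q +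
          max 1 (μ.real univ ^ (q - 1)) * ∫ r, ‖f r‖ ^ q ∂μ) := by
        gcongr
        · exact le_max_left _ _
        · exact le_max_right _ _
    _ = _ := by ring

end RpowEstimate

section MatrixIntegral

variable {ι α : Type*} [Fintype ι]

theorem posSemidef_of_sum_mul_mul_nonneg {b : ι → ι → ℝ}
    (hsymm : ∀ i j, b i j = b j i) (hpos : ∀ ξ : ι → ℝ, 0 ≤ ∑ i, ∑ j, b i j * ξ i * ξ j) :
    (Matrix.of b).PosSemidef := by
  refine .of_dotProduct_mulVec_nonneg (Matrix.IsHermitian.ext fun i j => hsymm j i) fun ξ => ?_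
  simpa [dotProduct, Matrix.mulVec, Finset.mul_sum, mul_left_comm, mul_comm] using hpos ξ

variable [DecidableEq ι] [MeasurableSpace α] {μ : Measure α}

theorem integrable_of_forall_integrable_apply {A : α → Matrix ι ι ℝ}
    (hA : ∀ i j, Integrable (fun r => A r i j) μ) : Integrable A μ := by
  rw [funext fun r => Matrix.matrix_eq_sum_single (A r)]
  refine integrable_finsetSum _ fun i _ => integrable_finsetSum _ fun j _ => ?_
  simpa only [Matrix.smul_single, smul_eq_mul, mul_one] using
    (hA i j).smul_const (Matrix.single i j (1 : ℝ))

theorem posSemidef_integral {A : α → Matrix ι ι ℝ}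
    (hpos : ∀ r, (A r).PosSemidef) : (∫ r, A r ∂μ).PosSemidef := by
  by_cases hA : Integrable A μ
  · refine .of_dotProduct_mulVec_nonneg ?_ fun ξ => ?_
    · calc star (∫ r, A r ∂μ) = ∫ r, star (A r) ∂μ :=
            ((starL' ℝ : Matrix ι ι ℝ ≃L[ℝ] Matrix ι ι ℝ).integral_comp_comm A).symm
        _ = ∫ r, A r ∂μ := integral_congr_ae (.of_forall fun r => (hpos r).isHermitian)
    · let form : Matrix ι ι ℝ →ₗ[ℝ] ℝ :=
        { toFun := fun M => star ξ ⬝ᵥ M *ᵥ ξ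
          map_add' := fun M M' => by rw [Matrix.add_mulVec, dotProduct_add]
          map_smul' := fun c M => by rw [Matrix.smul_mulVec, dotProduct_smul, RingHom.id_apply] }
      calc 0 ≤ ∫ r, form (A r) ∂μ :=
            integral_nonneg fun r => (hpos r).dotProduct_mulVec_nonneg ξ
        _ = form (∫ r, A r ∂μ) := form.toContinuousLinearMap.integral_comp_comm hA
  · rw [integral_undef hA]
    exact .zero

end MatrixIntegral

section Translation

variable {G E : Type*} [AddCommGroup G] [MeasurableSpace G] [NormedAddCommGroup E] [NormedSpace ℝ E]
  {p : ℝ≥0∞} {μ : Measure G}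

section Measurable

variable [MeasurableAdd G] [μ.IsAddRightInvariant] [Fact (1 ≤ p)]

/-- The translation `z ↦ z(· + y)` as an isometry of `L^p`. -/
def translate (y : G) : Lp E p μ →ₗᵢ[ℝ] Lp E p μ :=
  Lp.compMeasurePreservingₗᵢ ℝ (· + y) (measurePreserving_add_right μ y)

theorem coeFn_translate (y : G) (z : Lp E p μ) : translate y z =ᵐ[μ] fun x => z (x + y) :=
  Lp.coeFn_compMeasurePreserving z (measurePreserving_add_right μ y)

theorem translate_zero (z : Lp E p μ) : translate 0 z = z := by
  ext1
  filter_upwards [coeFn_translate 0 z] with x hx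
  simpa using hx

theorem translate_translate (y y' : G) (z : Lp E p μ) :
    translate y (translate y' z) = translate (y + y') z := by
  ext1
  filter_upwards [coeFn_translate y (translate y' z), coeFn_translate (y + y') z,
    (measurePreserving_add_right μ y).quasiMeasurePreserving.ae (coeFn_translate y' z)]
    with x h₁ h₂ h₃
  rw [h₁, h₂, h₃, add_assoc]

theorem translate_comm (y y' : G) (z : Lp E p μ) :
    translate y (translate y' z) = translate y' (translate y z) := by
  rw [translate_translate, translate_translate, add_comm]

end Measurable

variable [TopologicalSpace G] [IsTopologicalAddGroup G] [BorelSpace G]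
  [IsLocallyFiniteMeasure μ] [μ.InnerRegularCompactLTTop] [μ.IsAddRightInvariant]
  [Fact (1 ≤ p)] [Fact (p ≠ ∞)]

theorem continuous_translate : Continuous fun w : G × Lp E p μ => translate w.1 w.2 := by
  have hg : Continuous fun w : G × Lp E p μ =>
      ContinuousMap.mk (fun x : G => x + w.1) (by fun_prop) :=
    ContinuousMap.continuous_of_continuous_uncurry _ (by
      simp only [Function.uncurry_def, ContinuousMap.coe_mk]; fun_prop)
  exact continuous_snd.compMeasurePreservingLp hg (fun w => measurePreserving_add_right μ w.1)
    Fact.out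

variable [SecondCountableTopology G]

theorem integrable_translate (ν : Measure G) [IsFiniteMeasure ν] (z : Lp E p μ) :
    Integrable (fun y => translate y z) ν :=
  .of_bound (continuous_translate.comp (.prodMk_left z)).aestronglyMeasurable ‖z‖
    (.of_forall fun y => by simp)

/-- The average `∫ z(· + y) ν(dy)` of the translates of `z`, that is, the convolution of `z` with
the reflection of `ν`, as a bounded operator on `L^p`. -/
def translationAverage (ν : Measure G) [IsFiniteMeasure ν] : Lp E p μ →L[ℝ] Lp E p μ :=
  LinearMap.mkContinuous
    { toFun z := ∫ y, translate y z ∂ν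
      map_add' z z' := by
        simpa only [map_add] using
          integral_add (integrable_translate ν z) (integrable_translate ν z')
      map_smul' c z := by
        simpa only [map_smul, RingHom.id_apply] using integral_smul c fun y => translate y z }
    (ν.real univ)
    fun z => by
      simpa [mul_comm] using norm_integral_le_of_norm_le_const (μ := ν) (C := ‖z‖)
        (.of_forall fun y => (LinearIsometry.norm_map (translate y) z).le)

theorem translationAverage_apply (ν : Measure G) [IsFiniteMeasure ν] (z : Lp E p μ) :
    translationAverage ν z = ∫ y, translate y z ∂ν := rfl

theorem map_translationAverage {F : Type*} [NormedAddCommGroup F] [NormedSpace ℝ F]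
    [CompleteSpace F] [CompleteSpace E] (ν : Measure G) [IsFiniteMeasure ν]
    (L : Lp E p μ →L[ℝ] F) (z : Lp E p μ) :
    L (translationAverage ν z) = ∫ y, L (translate y z) ∂ν :=
  (L.integral_comp_comm (integrable_translate ν z)).symm

theorem norm_map_translationAverage_le {F : Type*} [NormedAddCommGroup F] [NormedSpace ℝ F]
    [CompleteSpace F] [CompleteSpace E] (ν : Measure G) [IsProbabilityMeasure ν]
    (L : Lp E p μ →L[ℝ] F) {z : Lp E p μ} {M : ℝ} (h : ∀ y, ‖L (translate y z)‖ ≤ M) :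
    ‖L (translationAverage ν z)‖ ≤ M := by
  rw [map_translationAverage]
  simpa using norm_integral_le_of_norm_le_const (μ := ν) (.of_forall h)

theorem norm_translationAverage_le (ν : Measure G) [IsProbabilityMeasure ν] (z : Lp E p μ) :
    ‖translationAverage ν z‖ ≤ ‖z‖ := by
  simpa [translationAverage_apply] using norm_integral_le_of_norm_le_const (μ := ν) (C := ‖z‖)
    (.of_forall fun y => (LinearIsometry.norm_map (translate y) z).le)

variable [CompleteSpace E]

theorem translate_translationAverage (ν : Measure G) [IsFiniteMeasure ν] (y : G) (z : Lp E p μ) :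
    translate y (translationAverage ν z) = translationAverage ν (translate y z) := by
  have := map_translationAverage ν (translate y).toContinuousLinearMap z
  simpa only [LinearIsometry.coe_toContinuousLinearMap, translate_comm y,
    translationAverage_apply] using this

theorem translationAverage_translationAverage (ν ν' : Measure G) [IsFiniteMeasure ν]
    [IsFiniteMeasure ν'] (z : Lp E p μ) :
    translationAverage ν (translationAverage ν' z) = translationAverage (ν ∗ ν') z := by
  rw [translationAverage_apply (ν ∗ ν'), integral_conv (integrable_translate _ z),
    translationAverage_apply ν]
  refine integral_congr_ae (.of_forall fun y => ?_)
  simp only [translate_translationAverage]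
  simp only [translationAverage_apply, translate_translate, add_comm]

end Translation

section TestFunction

variable {V : Type*} [NormedAddCommGroup V] [NormedSpace ℝ V]

/-- The space of test functions on `V`. -/
abbrev TestFn (V : Type*) [NormedAddCommGroup V] [NormedSpace ℝ V] : Type _ :=
  𝓓((⊤ : TopologicalSpace.Opens V), ℝ)

theorem TestFn.lineDerivOp_apply (φ : TestFn V) (v x : V) : ∂_{v} φ x = fderiv ℝ φ x v := by
  rw [TestFunction.lineDerivOp_eq_lineDerivCLM ℝ, TestFunction.lineDerivCLM_apply_of_le (by simp),
    (φ.contDiff.differentiable (by simp)).differentiableAt.lineDeriv_eq_fderiv]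

/-- The translated test function `φ(· - y)`. -/
def TestFn.shift (y : V) (φ : TestFn V) : TestFn V where
  toFun x := φ (x - y)
  contDiff' := φ.contDiff.comp (contDiff_id.sub contDiff_const)
  hasCompactSupport' := φ.hasCompactSupport.comp_homeomorph (Homeomorph.subRight y)
  tsupport_subset' := subset_univ _

theorem TestFn.shift_apply (y : V) (φ : TestFn V) (x : V) : φ.shift y x = φ (x - y) := rfl

theorem TestFn.lineDerivOp_shift (y v : V) (φ : TestFn V) :
    ∂_{v} (φ.shift y) = TestFn.shift y (∂_{v} φ) := by
  ext x
  have : fderiv ℝ (φ.shift y) x = fderiv ℝ φ (x - y) := fderiv_comp_sub y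
  rw [TestFn.shift_apply, lineDerivOp_apply, lineDerivOp_apply, this]

variable [MeasurableSpace V] [BorelSpace V] {μ : Measure V} {p : ℝ≥0∞} [Fact (1 ≤ p)]

theorem TestFn.memLp [IsFiniteMeasureOnCompacts μ] (φ : TestFn V) (q : ℝ≥0∞) : MemLp φ q μ :=
  φ.continuous.memLp_of_hasCompactSupport φ.hasCompactSupport

/-- The pairing `z ↦ ∫ z φ` of `L^p` with a test function, continuous by Hölder's inequality. -/
def pairing [IsFiniteMeasureOnCompacts μ] (φ : TestFn V) : Lp ℝ p μ →L[ℝ] ℝ :=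
  haveI : Fact (1 ≤ p.conjExponent) := ⟨le_self_add⟩
  ((ContinuousLinearMap.mul ℝ ℝ).lpPairing μ p p.conjExponent).flip ((φ.memLp _).toLp φ)

theorem pairing_apply [IsFiniteMeasureOnCompacts μ] (φ : TestFn V) (z : Lp ℝ p μ) :
    pairing φ z = ∫ x, z x * φ x ∂μ := by
  have : Fact (1 ≤ p.conjExponent) := ⟨le_self_add⟩
  rw [pairing, ContinuousLinearMap.flip_apply, ContinuousLinearMap.lpPairing_eq_integral]
  apply integral_congr_ae
  filter_upwards [(φ.memLp _).coeFn_toLp] with x hx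
  rw [hx, ContinuousLinearMap.mul_apply']

theorem pairing_sum_smul [IsFiniteMeasureOnCompacts μ] {ι : Type*} [Fintype ι] (c : ι → ℝ)
    (φ : ι → TestFn V) (z : Lp ℝ p μ) :
    pairing (∑ i, c i • φ i) z = ∑ i, c i * pairing (φ i) z := by
  have hint : ∀ i, Integrable (fun x => z x * φ i x) μ := fun i =>
    (Lp.memLp z).integrable_mul ((φ i).memLp p.conjExponent)
  simp only [pairing_apply, ← integral_const_mul]
  rw [← integral_finsetSum _ fun i _ => (hint i).const_mul (c i)]
  congr 1
  ext x
  simp [Finset.mul_sum, mul_left_comm]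

theorem eq_zero_of_forall_pairing_eq_zero [FiniteDimensional ℝ V] [IsLocallyFiniteMeasure μ]
    {z : Lp ℝ p μ} (h : ∀ φ : TestFn V, pairing φ z = 0) : z = 0 := by
  rw [Lp.eq_zero_iff_ae_eq_zero]
  refine ae_eq_zero_of_integral_contDiff_smul_eq_zero
    ((Lp.memLp z).locallyIntegrable Fact.out) fun g hg hg' => ?_
  simpa [pairing_apply, mul_comm] using h ⟨g, hg, hg', subset_univ _⟩

theorem pairing_translate [μ.IsAddRightInvariant] [IsFiniteMeasureOnCompacts μ] (φ : TestFn V)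
    (y : V) (z : Lp ℝ p μ) :
    pairing φ (translate y z) = pairing (φ.shift y) z := by
  rw [pairing_apply, pairing_apply,
    ← integral_add_right_eq_self (fun x => z x * φ.shift y x) y]
  apply integral_congr_ae
  filter_upwards [coeFn_translate y z] with x hx
  rw [hx, TestFn.shift_apply, add_sub_cancel_right]

variable [FiniteDimensional ℝ V] [μ.IsAddHaarMeasure]

theorem hasDerivAt_pairing_translate_smul (φ : TestFn V) (y : V) (z : Lp ℝ p μ) (s : ℝ) :
    HasDerivAt (fun s : ℝ => pairing φ (translate (s • y) z))
      (-pairing (∂_{y} φ) (translate (s • y) z)) s := by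
  -- `w ↦ ∫ z(x) φ(x - w) dx` is the convolution of `z` with the reflection of `φ`.
  set ψ : V → ℝ := fun x => φ (-x)
  have hψ : ContDiff ℝ 1 ψ := (φ.contDiff.of_le (by simp)).comp contDiff_neg
  have hψ_supp : HasCompactSupport ψ := φ.hasCompactSupport.comp_homeomorph (Homeomorph.neg V)
  have hz : LocallyIntegrable z μ := (Lp.memLp z).locallyIntegrable Fact.out
  have hconv : (fun s : ℝ => pairing φ (translate (s • y) z)) =
      fun s : ℝ => convolution z ψ (ContinuousLinearMap.mul ℝ ℝ) μ (s • y) := by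
    ext s
    rw [pairing_translate]
    simp [pairing_apply, convolution, ψ, TestFn.shift_apply]
  have hfderiv : ∀ x, fderiv ℝ ψ x y = -∂_{y} φ (-x) := fun x => by
    have := (φ.contDiff.differentiable (by simp) (-x)).hasFDerivAt.comp x (hasFDerivAt_id x).neg
    simp [TestFn.lineDerivOp_apply, this.fderiv, ψ, ← Function.comp_def]
  have hline : HasDerivAt (fun s : ℝ => s • y) y s := by
    simpa using (hasDerivAt_id s).smul_const y
  rw [hconv]
  refine ((hψ_supp.hasFDerivAt_convolution_right (ContinuousLinearMap.mul ℝ ℝ) hz hψ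
    (s • y)).comp_hasDerivAt s hline).congr_deriv ?_
  rw [convolution_precompR_apply _ hz (hψ_supp.fderiv ℝ) (hψ.continuous_fderiv (by simp)),
    pairing_translate]
  simp [convolution, hfderiv, pairing_apply, TestFn.shift_apply, integral_neg]

end TestFunction

section Taylor

variable {ι : Type*} [Fintype ι]

theorem abs_le_of_hasDerivAt_smul {g : (ι → ℝ) → ℝ} {h : ι → (ι → ℝ) → ℝ} {C : ι → ℝ} {k : ℕ}
    (hC : ∀ i, 0 ≤ C i) (hg₀ : g 0 = 0)
    (hg : ∀ (y : ι → ℝ) (s : ℝ),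
      HasDerivAt (fun s : ℝ => g (s • y)) (∑ i, y i * h i (s • y)) s)
    (hh : ∀ i y, |h i y| ≤ C i * ‖y‖ ^ k) (y : ι → ℝ) :
    |g y| ≤ (∑ i, C i) * ‖y‖ ^ (k + 1) := by
  have hbound : ∀ s ∈ Icc (0 : ℝ) 1,
      ‖∑ i, y i * h i (s • y)‖ ≤ (∑ i, C i) * ‖y‖ ^ (k + 1) := fun s hs => by
    rw [Finset.sum_mul]
    refine norm_sum_le_of_le _ fun i _ => ?_
    have hsy : ‖s • y‖ ≤ ‖y‖ := by
      rw [norm_smul, Real.norm_of_nonneg hs.1]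
      exact mul_le_of_le_one_left (norm_nonneg y) hs.2
    calc ‖y i * h i (s • y)‖ = ‖y i‖ * |h i (s • y)| := norm_mul _ _
      _ ≤ ‖y‖ * (C i * ‖y‖ ^ k) := by
        gcongr
        · exact norm_le_pi_norm y i
        · exact (hh i _).trans (by gcongr; exact hC i)
      _ = C i * ‖y‖ ^ (k + 1) := by ring
  simpa [hg₀] using (convex_Icc (0 : ℝ) 1).norm_image_sub_le_of_norm_hasDerivWithin_le
    (fun s _ => (hg y s).hasDerivWithinAt) hbound (left_mem_Icc.2 zero_le_one)
    (right_mem_Icc.2 zero_le_one)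

variable {p : ℝ≥0∞} [Fact (1 ≤ p)]

/-- The partial derivative of a test function in the direction of the `i`-th basis vector. -/
abbrev partialDeriv [DecidableEq ι] (i : ι) (φ : TestFn (ι → ℝ)) : TestFn (ι → ℝ) :=
  ∂_{(Pi.single i 1 : ι → ℝ)} φ

theorem lineDerivOp_eq_sum_partialDeriv [DecidableEq ι] (y : ι → ℝ) (φ : TestFn (ι → ℝ)) :
    ∂_{y} φ = ∑ i, y i • partialDeriv i φ := by
  ext x
  conv_lhs => rw [pi_eq_sum_univ' y]
  simp [partialDeriv, TestFn.lineDerivOp_apply]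

/-- The Lebesgue space `L^p` of real functions of `ι` variables. -/
abbrev LpSpace (ι : Type*) [Fintype ι] (p : ℝ≥0∞) : Type _ :=
  Lp ℝ p (volume : Measure (ι → ℝ))

theorem hasDerivAt_pairing_translate [DecidableEq ι] (φ : TestFn (ι → ℝ)) (z : LpSpace ι p)
    (y : ι → ℝ) (s : ℝ) :
    HasDerivAt (fun s : ℝ => pairing φ (translate (s • y) z))
      (∑ i, y i * -pairing (partialDeriv i φ) (translate (s • y) z)) s := by
  have := hasDerivAt_pairing_translate_smul φ y z s
  rw [lineDerivOp_eq_sum_partialDeriv, pairing_sum_smul] at this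
  simpa only [mul_neg, Finset.sum_neg_distrib] using this

theorem exists_abs_pairing_translate_sub_le (φ : TestFn (ι → ℝ)) :
    ∃ C ≥ 0, ∀ (z : LpSpace ι p) (y : ι → ℝ),
      |pairing φ (translate y z) - pairing φ z| ≤ C * ‖z‖ * ‖y‖ := by
  classical
  refine ⟨∑ i, ‖(pairing (partialDeriv i φ) : LpSpace ι p →L[ℝ] ℝ)‖, by positivity, fun z y => ?_⟩
  have := abs_le_of_hasDerivAt_smul (g := fun y => pairing φ (translate y z) - pairing φ z)
    (h := fun i y => -pairing (partialDeriv i φ) (translate y z)) (k := 0)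
    (C := fun i => ‖(pairing (partialDeriv i φ) : LpSpace ι p →L[ℝ] ℝ)‖ * ‖z‖)
    (fun i => by positivity) (by simp [translate_zero])
    (fun y s => (hasDerivAt_pairing_translate φ z y s).sub_const _)
    (fun i y => by
      simpa using (pairing (partialDeriv i φ)).le_opNorm (translate y z)) y
  simpa [Finset.sum_mul] using this

variable [DecidableEq ι]

theorem exists_abs_pairing_translate_sub_add_le (φ : TestFn (ι → ℝ)) :
    ∃ C ≥ 0, ∀ (z : LpSpace ι p) (y : ι → ℝ),
      |pairing φ (translate y z) - pairing φ z + ∑ i, y i * pairing (partialDeriv i φ) z| ≤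
        C * ‖z‖ * ‖y‖ ^ 2 := by
  choose C hC hbound using fun i =>
    exists_abs_pairing_translate_sub_le (p := p) (partialDeriv i φ)
  refine ⟨∑ i, C i, Finset.sum_nonneg fun i _ => hC i, fun z y => ?_⟩
  rw [Finset.sum_mul]
  refine abs_le_of_hasDerivAt_smul
    (g := fun y =>
      pairing φ (translate y z) - pairing φ z + ∑ i, y i * pairing (partialDeriv i φ) z)
    (h := fun i y =>
      -(pairing (partialDeriv i φ) (translate y z) - pairing (partialDeriv i φ) z))
    (fun i => mul_nonneg (hC i) (norm_nonneg z)) (by simp [translate_zero]) (fun y s => ?_)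
    (fun i y => by simpa only [abs_neg, pow_one] using hbound i z y) y
  have hlin : HasDerivAt (fun s : ℝ => ∑ i, (s • y) i * pairing (partialDeriv i φ) z)
      (∑ i, y i * pairing (partialDeriv i φ) z) s :=
    .fun_sum fun i _ => by simpa using ((hasDerivAt_id s).mul_const (y i)).mul_const _
  refine (((hasDerivAt_pairing_translate φ z y s).sub_const _).add hlin).congr_deriv ?_
  rw [← Finset.sum_add_distrib]
  exact Finset.sum_congr rfl fun i _ => by ring

/-- The form `(H, z) ↦ ∫ z H^{ij} ∂_i ∂_j φ`, i.e. the operator `H^{ij} ∂_i ∂_j` tested against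
`φ`. -/
def hessianPairing (φ : TestFn (ι → ℝ)) : Matrix ι ι ℝ →L[ℝ] LpSpace ι p →L[ℝ] ℝ :=
  LinearMap.toContinuousLinearMap (∑ i, ∑ j, (Matrix.entryLinearMap ℝ ℝ i j).smulRight
    (pairing (partialDeriv i (partialDeriv j φ))))

theorem hessianPairing_apply (φ : TestFn (ι → ℝ)) (H : Matrix ι ι ℝ) (z : LpSpace ι p) :
    hessianPairing φ H z = ∑ i, ∑ j, H i j * pairing (partialDeriv i (partialDeriv j φ)) z := by
  simp [hessianPairing, sum_apply]

theorem hessianPairing_vecMulVec (φ : TestFn (ι → ℝ)) (y : ι → ℝ) (z : LpSpace ι p) :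
    hessianPairing φ (Matrix.vecMulVec y y) z =
      ∑ j, y j * ∑ i, y i * pairing (partialDeriv i (partialDeriv j φ)) z := by
  rw [hessianPairing_apply, Finset.sum_comm]
  simp [Matrix.vecMulVec_apply, Finset.mul_sum, mul_left_comm, mul_assoc]

theorem exists_abs_pairing_translate_taylor_le (φ : TestFn (ι → ℝ)) :
    ∃ C ≥ 0, ∀ (z : LpSpace ι p) (y : ι → ℝ),
      |pairing φ (translate y z) - pairing φ z + ∑ i, y i * pairing (partialDeriv i φ) z
        - hessianPairing φ (Matrix.vecMulVec y y) z / 2| ≤ C * ‖z‖ * ‖y‖ ^ 3 := by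
  choose C hC hbound using fun i =>
    exists_abs_pairing_translate_sub_add_le (p := p) (partialDeriv i φ)
  refine ⟨∑ i, C i, Finset.sum_nonneg fun i _ => hC i, fun z y => ?_⟩
  rw [Finset.sum_mul]
  refine abs_le_of_hasDerivAt_smul
    (g := fun y => pairing φ (translate y z) - pairing φ z + ∑ i, y i * pairing (partialDeriv i φ) z
      - hessianPairing φ (Matrix.vecMulVec y y) z / 2)
    (h := fun j y => -(pairing (partialDeriv j φ) (translate y z) - pairing (partialDeriv j φ) z
      + ∑ i, y i * pairing (partialDeriv i (partialDeriv j φ)) z))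
    (fun i => mul_nonneg (hC i) (norm_nonneg z)) (by simp [translate_zero]) (fun y s => ?_)
    (fun i y => (abs_neg _).trans_le (hbound i z y)) y
  have hlin : HasDerivAt (fun s : ℝ => ∑ i, (s • y) i * pairing (partialDeriv i φ) z)
      (∑ i, y i * pairing (partialDeriv i φ) z) s :=
    .fun_sum fun i _ => by simpa using ((hasDerivAt_id s).mul_const (y i)).mul_const _
  have hquad : HasDerivAt
      (fun s : ℝ => hessianPairing φ (Matrix.vecMulVec (s • y) (s • y)) z / 2)
      (s * hessianPairing φ (Matrix.vecMulVec y y) z) s := by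
    simp only [Matrix.smul_vecMulVec, Matrix.vecMulVec_smul, map_smul, smul_apply, smul_eq_mul]
    refine (((hasDerivAt_id s).mul ((hasDerivAt_id s).mul_const _)).div_const 2).congr_deriv ?_
    simp
  refine ((((hasDerivAt_pairing_translate φ z y s).sub_const _).add hlin).sub hquad).congr_deriv ?_
  rw [hessianPairing_vecMulVec, Finset.mul_sum, ← Finset.sum_add_distrib,
    ← Finset.sum_sub_distrib]
  refine Finset.sum_congr rfl fun j _ => ?_
  simp only [Pi.smul_apply, smul_eq_mul, mul_assoc, ← Finset.mul_sum]
  ring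

end Taylor

section Moments

variable {ι : Type*} [Fintype ι] {p : ℝ≥0∞} [Fact (1 ≤ p)]

theorem exists_abs_pairing_translationAverage_sub_le [Fact (p ≠ ∞)] (φ : TestFn (ι → ℝ)) :
    ∃ C ≥ 0, ∀ (ν : Measure (ι → ℝ)) [IsProbabilityMeasure ν] (z : LpSpace ι p),
      Integrable id ν →
      |pairing φ (translationAverage ν z) - pairing φ z| ≤ C * ‖z‖ * ∫ y, ‖y‖ ∂ν := by
  obtain ⟨C, hC, hbound⟩ := exists_abs_pairing_translate_sub_le (p := p) φ
  refine ⟨C, hC, fun ν _ z hν => ?_⟩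
  have hint : Integrable (fun y => pairing φ (translate y z)) ν :=
    (pairing φ).integrable_comp (integrable_translate ν z)
  calc |pairing φ (translationAverage ν z) - pairing φ z|
      = ‖∫ y, (pairing φ (translate y z) - pairing φ z) ∂ν‖ := by
        rw [integral_sub hint (integrable_const _), ← map_translationAverage]
        simp
    _ ≤ ∫ y, C * ‖z‖ * ‖y‖ ∂ν :=
        norm_integral_le_of_norm_le (hν.norm.const_mul _) (.of_forall (hbound z))
    _ = C * ‖z‖ * ∫ y, ‖y‖ ∂ν := integral_const_mul _ _

variable [DecidableEq ι]

theorem integral_hessianPairing_vecMulVec {ν : Measure (ι → ℝ)} {Q : Matrix ι ι ℝ}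
    (hν : MemLp id 2 ν) (hQ : ∀ i j, ∫ y, y i * y j ∂ν = Q i j) (φ : TestFn (ι → ℝ))
    (z : LpSpace ι p) :
    Integrable (fun y => hessianPairing φ (Matrix.vecMulVec y y) z) ν ∧
      ∫ y, hessianPairing φ (Matrix.vecMulVec y y) z ∂ν = hessianPairing φ Q z := by
  have hint : ∀ i j, Integrable (fun y : ι → ℝ => y i * y j) ν := fun i j =>
    (hν.eval i).integrable_mul (hν.eval j)
  simp only [hessianPairing_apply, Matrix.vecMulVec_apply]
  refine ⟨integrable_finsetSum _ fun i _ => integrable_finsetSum _ fun j _ =>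
    (hint i j).mul_const _, ?_⟩
  rw [integral_finsetSum _ fun i _ => integrable_finsetSum _ fun j _ => (hint i j).mul_const _]
  refine Finset.sum_congr rfl fun i _ => ?_
  rw [integral_finsetSum _ fun j _ => (hint i j).mul_const _]
  exact Finset.sum_congr rfl fun j _ => by rw [integral_mul_const, hQ]

variable [Fact (p ≠ ∞)]

theorem exists_abs_pairing_translationAverage_sub_hessianPairing_le (φ : TestFn (ι → ℝ)) :
    ∃ C ≥ 0, ∀ (ν : Measure (ι → ℝ)) [IsProbabilityMeasure ν] (Q : Matrix ι ι ℝ)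
      (z : LpSpace ι p), MemLp id 3 ν → (∀ i, ∫ y, y i ∂ν = 0) →
      (∀ i j, ∫ y, y i * y j ∂ν = Q i j) →
      |pairing φ (translationAverage ν z) - pairing φ z - hessianPairing φ Q z / 2| ≤
        C * ‖z‖ * ∫ y, ‖y‖ ^ 3 ∂ν := by
  obtain ⟨C, hC, hbound⟩ := exists_abs_pairing_translate_taylor_le (p := p) φ
  refine ⟨C, hC, fun ν _ Q z hν hmean hQ => ?_⟩
  have hint : Integrable (fun y => pairing φ (translate y z)) ν :=
    (pairing φ).integrable_comp (integrable_translate ν z)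
  have hsub : Integrable (fun y => pairing φ (translate y z) - pairing φ z) ν :=
    hint.sub (integrable_const _)
  have hcoord : ∀ i, Integrable (fun y : ι → ℝ => y i) ν := fun i =>
    (hν.eval i).integrable (by norm_num)
  have hlin : Integrable (fun y : ι → ℝ => ∑ i, y i * pairing (partialDeriv i φ) z) ν :=
    integrable_finsetSum _ fun i _ => (hcoord i).mul_const _
  have hlin_zero : ∫ y : ι → ℝ, ∑ i, y i * pairing (partialDeriv i φ) z ∂ν = 0 := by
    rw [integral_finsetSum _ fun i _ => (hcoord i).mul_const _]
    simp [integral_mul_const, hmean]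
  obtain ⟨hquad, hquad_eq⟩ :=
    integral_hessianPairing_vecMulVec (hν.mono_exponent (by norm_num)) hQ φ z
  calc |pairing φ (translationAverage ν z) - pairing φ z - hessianPairing φ Q z / 2|
      = ‖∫ y, (pairing φ (translate y z) - pairing φ z + ∑ i, y i * pairing (partialDeriv i φ) z
          - hessianPairing φ (Matrix.vecMulVec y y) z / 2) ∂ν‖ := by
        rw [integral_sub (hsub.fun_add hlin) (hquad.div_const 2), integral_add hsub hlin,
          integral_sub hint (integrable_const _), hlin_zero, integral_div, hquad_eq,
          ← map_translationAverage]
        simp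
    _ ≤ ∫ y, C * ‖z‖ * ‖y‖ ^ 3 ∂ν :=
        norm_integral_le_of_norm_le (hν.integrable_norm_pow' (p := 3) |>.const_mul _)
          (.of_forall (hbound z))
    _ = C * ‖z‖ * ∫ y, ‖y‖ ^ 3 ∂ν := integral_const_mul _ _

end Moments

section HeatOperator

variable {ι : Type*} [Fintype ι] [DecidableEq ι]

/-- The centred Gaussian measure on `ℝ^ι` with covariance matrix `2H`, that is, the heat kernel of
`H^{ij} ∂_i ∂_j` at time `1`. Only meaningful for positive semidefinite `H`. -/
def heatMeasure (H : Matrix ι ι ℝ) : Measure (ι → ℝ) :=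
  (multivariateGaussian 0 ((2 : ℝ) • H)).map (EuclideanSpace.equiv ι ℝ)

instance isGaussian_heatMeasure (H : Matrix ι ι ℝ) : IsGaussian (heatMeasure H) := by
  unfold heatMeasure
  infer_instance

/-- A linear map pushing the standard Gaussian measure forward to `heatMeasure H`. -/
def heatRoot (H : Matrix ι ι ℝ) : EuclideanSpace ℝ ι →L[ℝ] (ι → ℝ) :=
  (EuclideanSpace.equiv ι ℝ).toContinuousLinearMap ∘L
    Matrix.toEuclideanCLM (𝕜 := ℝ) (CFC.sqrt ((2 : ℝ) • H))

theorem map_heatRoot_stdGaussian (H : Matrix ι ι ℝ) :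
    (stdGaussian (EuclideanSpace ℝ ι)).map (heatRoot H) = heatMeasure H := by
  rw [heatMeasure, multivariateGaussian, Measure.map_map (by fun_prop) (by fun_prop)]
  congr 1
  ext x
  simp [heatRoot]

theorem integral_heatMeasure {F : Type*} [NormedAddCommGroup F] [NormedSpace ℝ F]
    (H : Matrix ι ι ℝ) {g : (ι → ℝ) → F} (hg : AEStronglyMeasurable g (heatMeasure H)) :
    ∫ y, g y ∂heatMeasure H = ∫ x, g (heatRoot H x) ∂stdGaussian (EuclideanSpace ℝ ι) := by
  rw [← map_heatRoot_stdGaussian] at hg ⊢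
  exact integral_map (by fun_prop) hg

theorem continuousOn_heatRoot : ContinuousOn heatRoot {H : Matrix ι ι ℝ | H.PosSemidef} := by
  have hsqrt : ContinuousOn (fun H : Matrix ι ι ℝ => CFC.sqrt ((2 : ℝ) • H)) {H | H.PosSemidef} :=
    CFC.continuousOn_sqrt.comp (continuous_const_smul _).continuousOn fun H hH =>
      (hH.smul zero_le_two).nonneg
  have hclm : Continuous (Matrix.toEuclideanCLM (n := ι) (𝕜 := ℝ)) :=
    LinearMap.continuous_of_finiteDimensional
      (Matrix.toEuclideanCLM (n := ι) (𝕜 := ℝ)).toAlgEquiv.toLinearMap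
  exact continuousOn_const.clm_comp (hclm.comp_continuousOn hsqrt)

theorem norm_heatRoot_apply_le {H : Matrix ι ι ℝ} (hH : H.PosSemidef) (x : EuclideanSpace ℝ ι) :
    ‖heatRoot H x‖ ≤ √(2 * ‖H‖) * ‖x‖ := by
  have hsqrt : ‖CFC.sqrt ((2 : ℝ) • H)‖ = √(2 * ‖H‖) := by
    rw [CFC.norm_sqrt _ (hH.smul zero_le_two).nonneg, norm_smul, Real.norm_two]
  calc ‖heatRoot H x‖ ≤ ‖Matrix.toEuclideanCLM (𝕜 := ℝ) (CFC.sqrt ((2 : ℝ) • H)) x‖ :=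
        (pi_norm_le_iff_of_nonneg (norm_nonneg _)).2 fun i =>
          PiLp.norm_apply_le (Matrix.toEuclideanCLM (𝕜 := ℝ) (CFC.sqrt ((2 : ℝ) • H)) x) i
    _ ≤ √(2 * ‖H‖) * ‖x‖ := by
        rw [← hsqrt, ← Matrix.l2_opNorm_toEuclideanCLM]
        exact ContinuousLinearMap.le_opNorm _ x

theorem integral_norm_pow_heatMeasure_le {H : Matrix ι ι ℝ} (hH : H.PosSemidef) (n : ℕ) :
    ∫ y, ‖y‖ ^ n ∂heatMeasure H ≤
      √(2 * ‖H‖) ^ n * ∫ x, ‖x‖ ^ n ∂stdGaussian (EuclideanSpace ℝ ι) := by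
  rw [integral_heatMeasure H (by fun_prop), ← integral_const_mul]
  refine integral_mono_of_nonneg (.of_forall fun x => by positivity)
    ((IsGaussian.memLp_id _ n (by simp)).integrable_norm_pow'.const_mul _)
    (.of_forall fun x => ?_)
  simpa [← mul_pow] using pow_le_pow_left₀ (norm_nonneg _) (norm_heatRoot_apply_le hH x) n

theorem integral_eval_heatMeasure (H : Matrix ι ι ℝ) (i : ι) : ∫ y, y i ∂heatMeasure H = 0 := by
  rw [integral_heatMeasure H (measurable_pi_apply i).aestronglyMeasurable]
  exact integral_strongDual_stdGaussian (ContinuousLinearMap.proj i ∘L heatRoot H)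

theorem integral_eval_mul_eval_heatMeasure {H : Matrix ι ι ℝ} (hH : H.PosSemidef) (i j : ι) :
    ∫ y, y i * y j ∂heatMeasure H = 2 * H i j := by
  have hmemLp : ∀ i, MemLp (fun y : ι → ℝ => y i) 2 (heatMeasure H) := fun i =>
    (IsGaussian.memLp_id (heatMeasure H) 2 (by simp)).eval i
  have hcov : cov[fun y => y i, fun y => y j; heatMeasure H] = 2 * H i j := by
    rw [heatMeasure, covariance_map (measurable_pi_apply i).aestronglyMeasurable
      (measurable_pi_apply j).aestronglyMeasurable (by fun_prop)]
    exact covariance_eval_multivariateGaussian (μ := 0) (hH.smul zero_le_two) i j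
  rw [← hcov, covariance_eq_sub (hmemLp i) (hmemLp j)]
  simp [integral_eval_heatMeasure]

theorem heatMeasure_zero : heatMeasure (0 : Matrix ι ι ℝ) = Measure.dirac 0 := by
  have hroot : ⇑(heatRoot (0 : Matrix ι ι ℝ)) = fun _ => 0 := by
    ext
    simp [heatRoot]
  rw [← map_heatRoot_stdGaussian, hroot, Measure.map_const, measure_univ, one_smul]

theorem heatMeasure_conv_heatMeasure {H K : Matrix ι ι ℝ} (hH : H.PosSemidef)
    (hK : K.PosSemidef) : heatMeasure H ∗ heatMeasure K = heatMeasure (H + K) := by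
  have hconv : multivariateGaussian 0 ((2 : ℝ) • H) ∗ multivariateGaussian 0 ((2 : ℝ) • K) =
      multivariateGaussian 0 ((2 : ℝ) • (H + K)) := by
    refine Measure.ext_of_charFun (funext fun x => ?_)
    rw [charFun_conv, charFun_multivariateGaussian (hH.smul zero_le_two),
      charFun_multivariateGaussian (hK.smul zero_le_two),
      charFun_multivariateGaussian ((hH.add hK).smul zero_le_two), ← Complex.exp_add]
    congr 1
    simp only [smul_add, Matrix.add_mulVec, dotProduct_add, inner_zero_right]
    push_cast
    ring
  rw [heatMeasure, heatMeasure, heatMeasure, ← hconv]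
  exact (Measure.map_conv_continuousLinearMap
    (EuclideanSpace.equiv ι ℝ).toContinuousLinearMap).symm

variable {p : ℝ≥0∞} [Fact (1 ≤ p)] [Fact (p ≠ ∞)]

/-- The operator `exp(H^{ij} ∂_i ∂_j)` on `L^p`, for a positive semidefinite matrix `H`. -/
def heat (H : Matrix ι ι ℝ) : LpSpace ι p →L[ℝ] LpSpace ι p :=
  translationAverage (heatMeasure H)

theorem norm_heat_apply_le (H : Matrix ι ι ℝ) (z : LpSpace ι p) : ‖heat H z‖ ≤ ‖z‖ :=
  norm_translationAverage_le _ z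

theorem heat_zero (z : LpSpace ι p) : heat 0 z = z := by
  rw [heat, translationAverage_apply, heatMeasure_zero, integral_dirac, translate_zero]

theorem heat_heat {H K : Matrix ι ι ℝ} (hH : H.PosSemidef) (hK : K.PosSemidef)
    (z : LpSpace ι p) : heat H (heat K z) = heat (H + K) z := by
  simp only [heat, translationAverage_translationAverage, heatMeasure_conv_heatMeasure hH hK]

theorem continuousOn_heat :
    ContinuousOn (fun w : Matrix ι ι ℝ × LpSpace ι p => heat w.1 w.2)
      ({H | H.PosSemidef} ×ˢ univ) := by
  refine continuousOn_prod_of_continuousOn_lipschitzOnWith' _ 1 (fun H _ => ?_) fun z _ => ?_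
  · refine LipschitzWith.lipschitzOnWith (LipschitzWith.of_dist_le_mul fun z z' => ?_)
    simpa [dist_eq_norm, map_sub] using norm_heat_apply_le H (z - z')
  · have heq : ∀ H : Matrix ι ι ℝ, heat H z =
        ∫ x, translate (heatRoot H x) z ∂stdGaussian (EuclideanSpace ℝ ι) := fun H => by
      rw [heat, translationAverage_apply,
        integral_heatMeasure H (integrable_translate _ z).aestronglyMeasurable]
    have hcont : Continuous fun y : ι → ℝ => translate y z :=
      continuous_translate.comp (.prodMk_left z)
    simp only [heq]
    refine continuousOn_of_dominated (bound := fun _ => ‖z‖)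
      (fun H _ => (hcont.comp (heatRoot H).continuous).aestronglyMeasurable)
      (fun H _ => .of_forall fun x => by simp) (integrable_const _) (.of_forall fun x => ?_)
    exact hcont.comp_continuousOn (continuousOn_heatRoot.clm_apply continuousOn_const)

theorem exists_abs_pairing_heat_sub_le (φ : TestFn (ι → ℝ)) :
    ∃ C ≥ 0, ∀ (H : Matrix ι ι ℝ) (z : LpSpace ι p), H.PosSemidef →
      |pairing φ (heat H z) - pairing φ z| ≤ C * ‖z‖ * √‖H‖ := by
  obtain ⟨C, hC, hbound⟩ := exists_abs_pairing_translationAverage_sub_le (p := p) φ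
  refine ⟨C * (√2 * ∫ x, ‖x‖ ∂stdGaussian (EuclideanSpace ℝ ι)), by positivity,
    fun H z hH => (hbound (heatMeasure H) z IsGaussian.integrable_id).trans ?_⟩
  calc C * ‖z‖ * ∫ y, ‖y‖ ∂heatMeasure H
      ≤ C * ‖z‖ * (√(2 * ‖H‖) * ∫ x, ‖x‖ ∂stdGaussian (EuclideanSpace ℝ ι)) := by
        gcongr
        simpa only [pow_one] using integral_norm_pow_heatMeasure_le hH 1
    _ = C * (√2 * ∫ x, ‖x‖ ∂stdGaussian (EuclideanSpace ℝ ι)) * ‖z‖ * √‖H‖ := by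
        rw [Real.sqrt_mul zero_le_two]
        ring

theorem exists_abs_pairing_heat_sub_hessianPairing_le (φ : TestFn (ι → ℝ)) :
    ∃ C ≥ 0, ∀ (H : Matrix ι ι ℝ) (z : LpSpace ι p), H.PosSemidef →
      |pairing φ (heat H z) - pairing φ z - hessianPairing φ H z| ≤ C * ‖z‖ * √‖H‖ ^ 3 := by
  obtain ⟨C, hC, hbound⟩ :=
    exists_abs_pairing_translationAverage_sub_hessianPairing_le (p := p) φ
  refine ⟨C * (√2 ^ 3 * ∫ x, ‖x‖ ^ 3 ∂stdGaussian (EuclideanSpace ℝ ι)), by positivity,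
    fun H z hH => ?_⟩
  have hTaylor := hbound (heatMeasure H) ((2 : ℝ) • H) z (IsGaussian.memLp_id _ 3 (by simp))
    (integral_eval_heatMeasure H) (integral_eval_mul_eval_heatMeasure hH)
  rw [map_smul, smul_apply, smul_eq_mul, mul_div_cancel_left₀ _ two_ne_zero] at hTaylor
  calc |pairing φ (heat H z) - pairing φ z - hessianPairing φ H z|
      ≤ C * ‖z‖ * ∫ y, ‖y‖ ^ 3 ∂heatMeasure H := hTaylor
    _ ≤ C * ‖z‖ * (√(2 * ‖H‖) ^ 3 * ∫ x, ‖x‖ ^ 3 ∂stdGaussian (EuclideanSpace ℝ ι)) := by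
        gcongr
        exact integral_norm_pow_heatMeasure_le hH 3
    _ = C * (√2 ^ 3 * ∫ x, ‖x‖ ^ 3 ∂stdGaussian (EuclideanSpace ℝ ι)) * ‖z‖ * √‖H‖ ^ 3 := by
        rw [Real.sqrt_mul zero_le_two]
        ring

end HeatOperator

section Propagator

variable {ι : Type*} [Fintype ι] [DecidableEq ι] {A : ℝ → Matrix ι ι ℝ}

variable {p : ℝ≥0∞} [Fact (1 ≤ p)]

theorem intervalIntegrable_hessianPairing (hA : Integrable A) {x : ℝ → LpSpace ι p} {s t : ℝ}
    (hst : s ≤ t) (hx : ContinuousOn x (Icc s t)) (φ : TestFn (ι → ℝ)) :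
    IntervalIntegrable (fun r => hessianPairing φ (A r) (x r)) volume s t := by
  rw [intervalIntegrable_iff_integrableOn_Icc_of_le hst]
  obtain ⟨B, hB⟩ := isCompact_Icc.exists_bound_of_continuousOn hx
  refine Integrable.mono' (g := fun r => ‖hessianPairing (p := p) φ‖ * ‖A r‖ * B)
    ((hA.norm.const_mul _).mul_const _).integrableOn
    ((hessianPairing φ).aestronglyMeasurable_comp₂ hA.aestronglyMeasurable.restrict
      (hx.aestronglyMeasurable measurableSet_Icc))
    ((ae_restrict_iff' measurableSet_Icc).2 (.of_forall fun r hr => ?_))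
  exact ((hessianPairing φ).le_opNorm₂ (A r) (x r)).trans (by gcongr; exact hB r hr)

theorem intervalIntegrable_hessianPairing_add_pairing (hA : Integrable A) {f : ℝ → LpSpace ι p}
    (hf : Integrable f) {x : ℝ → LpSpace ι p} {s t : ℝ} (hst : s ≤ t)
    (hx : ContinuousOn x (Icc s t)) (φ : TestFn (ι → ℝ)) :
    IntervalIntegrable (fun r => hessianPairing φ (A r) (x r) + pairing φ (f r)) volume s t :=
  (intervalIntegrable_hessianPairing hA hst hx φ).add
    ((pairing φ).integrable_comp hf).intervalIntegrable

theorem abs_hessianPairing_integral_sub_integral_le (hA : Integrable A) {x : ℝ → LpSpace ι p}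
    {s t η : ℝ} (hst : s ≤ t) (hx : ContinuousOn x (Icc s t))
    (hη : ∀ r ∈ Icc s t, ‖x r - x s‖ ≤ η) (φ : TestFn (ι → ℝ)) :
    |hessianPairing φ (∫ r in Ioc s t, A r) (x s) - ∫ r in s..t, hessianPairing φ (A r) (x r)| ≤
      ‖hessianPairing (p := p) φ‖ * η * ∫ r in s..t, ‖A r‖ := by
  have hfrozen : hessianPairing φ (∫ r in Ioc s t, A r) (x s) =
      ∫ r in s..t, hessianPairing φ (A r) (x s) := by
    rw [← intervalIntegral.integral_of_le hst]
    exact (((hessianPairing (p := p) φ).flip (x s)).intervalIntegral_comp_comm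
      hA.intervalIntegrable).symm
  rw [hfrozen, ← intervalIntegral.integral_sub
    (intervalIntegrable_hessianPairing hA hst continuousOn_const φ)
    (intervalIntegrable_hessianPairing hA hst hx φ), ← intervalIntegral.integral_const_mul,
    ← Real.norm_eq_abs]
  refine intervalIntegral.norm_integral_le_of_norm_le hst (.of_forall fun r hr => ?_)
    (hA.norm.const_mul _).intervalIntegrable
  rw [← map_sub, mul_right_comm]
  refine ((hessianPairing (p := p) φ).le_opNorm₂ (A r) (x s - x r)).trans ?_
  gcongr
  rw [norm_sub_rev]
  exact hη r (Ioc_subset_Icc_self hr)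

variable [Fact (p ≠ ∞)]

/-- The solution operator from time `s` to time `t` of `∂_t u = A^{ij}(t) ∂_i ∂_j u`. Integrating
over `Ioc s t` makes it the identity for `t ≤ s`. -/
def propagator (A : ℝ → Matrix ι ι ℝ) (s t : ℝ) : LpSpace ι p →L[ℝ] LpSpace ι p :=
  heat (∫ r in Ioc s t, A r)

theorem norm_propagator_apply_le (s t : ℝ) (z : LpSpace ι p) : ‖propagator A s t z‖ ≤ ‖z‖ :=
  norm_heat_apply_le _ z

theorem propagator_self (t : ℝ) (z : LpSpace ι p) : propagator A t t z = z := by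
  simp [propagator, heat_zero]

theorem translate_propagator (y : ι → ℝ) (s t : ℝ) (z : LpSpace ι p) :
    translate y (propagator A s t z) = propagator A s t (translate y z) :=
  translate_translationAverage _ y z

theorem propagator_propagator (hA : Integrable A) (hpos : ∀ r, (A r).PosSemidef) {s r t : ℝ}
    (hsr : s ≤ r) (hrt : r ≤ t) (z : LpSpace ι p) :
    propagator A r t (propagator A s r z) = propagator A s t z := by
  rw [propagator, propagator, heat_heat (posSemidef_integral hpos) (posSemidef_integral hpos),
    propagator, add_comm, ← setIntegral_union (Ioc_disjoint_Ioc_of_le le_rfl) measurableSet_Ioc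
      hA.integrableOn hA.integrableOn, Ioc_union_Ioc_eq_Ioc hsr hrt]

theorem continuous_heat_apply {X : Type*} [TopologicalSpace X] {H : X → Matrix ι ι ℝ}
    {z : X → LpSpace ι p} (hH : Continuous H) (hz : Continuous z) (hpos : ∀ x, (H x).PosSemidef) :
    Continuous fun x => heat (H x) (z x) :=
  continuousOn_heat.comp_continuous (f := fun x => (H x, z x)) (hH.prodMk hz)
    fun x => ⟨hpos x, trivial⟩

theorem continuous_propagator (hA : Integrable A) (hpos : ∀ r, (A r).PosSemidef) :
    Continuous fun w : (ℝ × ℝ) × LpSpace ι p => propagator A w.1.1 w.1.2 w.2 := by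
  have hH : Continuous fun w : ℝ × ℝ => ∫ r in Ioc w.1 w.2, A r := continuous_setIntegral_Ioc hA
  exact continuous_heat_apply (hH.comp continuous_fst) continuous_snd
    fun _ => posSemidef_integral hpos

theorem exists_abs_pairing_propagator_sub_le (φ : TestFn (ι → ℝ)) :
    ∃ C ≥ 0, ∀ {A : ℝ → Matrix ι ι ℝ}, (∀ r, (A r).PosSemidef) → ∀ {s t η : ℝ}, s ≤ t → 0 ≤ η →
      ∫ r in s..t, ‖A r‖ ≤ η ^ 2 → ∀ z : LpSpace ι p,
      |pairing φ (propagator A s t z) - pairing φ z| ≤ C * ‖z‖ * η := by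
  obtain ⟨C, hC, hbound⟩ := exists_abs_pairing_heat_sub_le (p := p) φ
  refine ⟨C, hC, fun {A} hpos {s t η} hst hη h z =>
    (hbound _ z (posSemidef_integral hpos)).trans ?_⟩
  gcongr
  exact (Real.sqrt_le_left hη).2 ((norm_setIntegral_Ioc_le A hst).trans h)

theorem exists_abs_pairing_propagator_sub_integral_le (φ : TestFn (ι → ℝ)) :
    ∃ C ≥ 0, ∀ {A : ℝ → Matrix ι ι ℝ}, Integrable A → (∀ r, (A r).PosSemidef) →
      ∀ {x : ℝ → LpSpace ι p} {s t η : ℝ}, s ≤ t → ContinuousOn x (Icc s t) →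
      (∀ r ∈ Icc s t, ‖x r - x s‖ ≤ η) → ∫ r in s..t, ‖A r‖ ≤ η ^ 2 →
      |pairing φ (propagator A s t (x s)) - pairing φ (x s)
        - ∫ r in s..t, hessianPairing φ (A r) (x r)| ≤
        C * (1 + ‖x s‖) * η * ∫ r in s..t, ‖A r‖ := by
  obtain ⟨C, hC, hbound⟩ := exists_abs_pairing_heat_sub_hessianPairing_le (p := p) φ
  set K := ‖hessianPairing (p := p) φ‖
  refine ⟨C + K, by positivity, fun {A} hA hpos {x s t η} hst hx hη hsmall => ?_⟩
  set H := ∫ r in Ioc s t, A r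
  set m := ∫ r in s..t, ‖A r‖
  have hη₀ : 0 ≤ η := (norm_nonneg _).trans (hη s (left_mem_Icc.2 hst))
  have hHm : ‖H‖ ≤ m := norm_setIntegral_Ioc_le A hst
  have hm₀ : 0 ≤ m := (norm_nonneg _).trans hHm
  have hsqrt : √‖H‖ ^ 3 ≤ m * η := by
    rw [pow_succ, Real.sq_sqrt (norm_nonneg H)]
    gcongr
    exact (Real.sqrt_le_left hη₀).2 (hHm.trans hsmall)
  calc |pairing φ (propagator A s t (x s)) - pairing φ (x s)
        - ∫ r in s..t, hessianPairing φ (A r) (x r)|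
      ≤ |pairing φ (heat H (x s)) - pairing φ (x s) - hessianPairing φ H (x s)|
        + |hessianPairing φ H (x s) - ∫ r in s..t, hessianPairing φ (A r) (x r)| :=
        abs_sub_le _ _ _
    _ ≤ C * ‖x s‖ * (m * η) + K * η * m := by
        gcongr
        · exact (hbound H (x s) (posSemidef_integral hpos)).trans (by gcongr)
        · exact abs_hessianPairing_integral_sub_integral_le hA hst hx hη φ
    _ ≤ (C + K) * (1 + ‖x s‖) * η * m := by
        have : 0 ≤ (C + K * ‖x s‖) * η * m := by positivity
        linarith

end Propagator

section MildSolution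

variable {ι : Type*} [Fintype ι] [DecidableEq ι] {p : ℝ≥0∞} [Fact (1 ≤ p)] [Fact (p ≠ ∞)]
  {A : ℝ → Matrix ι ι ℝ} {f : ℝ → LpSpace ι p} {u₀ : LpSpace ι p}

theorem integrable_propagator (hA : Integrable A) (hpos : ∀ r, (A r).PosSemidef)
    (hf : Integrable f) (t : ℝ) : Integrable fun r => propagator A r t (f r) := by
  have hpair : AEStronglyMeasurable (fun r => ((r, t), f r)) volume :=
    (Continuous.prodMk_left t).aestronglyMeasurable.prodMk hf.aestronglyMeasurable
  have hmeas := (continuous_propagator (p := p) hA hpos).comp_aestronglyMeasurable hpair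
  exact hf.mono hmeas (.of_forall fun r => norm_propagator_apply_le r t (f r))

/-- Duhamel's formula for the solution of `∂_t u = A^{ij}(t) ∂_i ∂_j u + f`, `u(0) = u₀`. -/
def mildSolution (A : ℝ → Matrix ι ι ℝ) (f : ℝ → LpSpace ι p) (u₀ : LpSpace ι p) (t : ℝ) :
    LpSpace ι p :=
  propagator A 0 t u₀ + ∫ r in 0..t, propagator A r t (f r)

theorem mildSolution_zero : mildSolution A f u₀ 0 = u₀ := by
  rw [mildSolution, propagator_self, intervalIntegral.integral_same, add_zero]

theorem mildSolution_eq_propagator_add (hA : Integrable A) (hpos : ∀ r, (A r).PosSemidef)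
    (hf : Integrable f) {s t : ℝ} (hs : 0 ≤ s) (hst : s ≤ t) :
    mildSolution A f u₀ t =
      propagator A s t (mildSolution A f u₀ s) + ∫ r in s..t, propagator A r t (f r) := by
  have hint := fun t => (integrable_propagator hA hpos hf t)
  have hpast : propagator A s t (∫ r in 0..s, propagator A r s (f r)) =
      ∫ r in 0..s, propagator A r t (f r) := by
    rw [← ContinuousLinearMap.intervalIntegral_comp_comm _ (hint s).intervalIntegrable]
    refine intervalIntegral.integral_congr fun r hr => ?_
    rw [uIcc_of_le hs] at hr
    exact propagator_propagator hA hpos hr.2 hst (f r)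
  rw [mildSolution, mildSolution, map_add, propagator_propagator hA hpos hs hst, hpast, add_assoc,
    intervalIntegral.integral_add_adjacent_intervals (hint t).intervalIntegrable
      (hint t).intervalIntegrable]

theorem norm_mildSolution_le (hf : Integrable f) {t : ℝ} (ht : 0 ≤ t) :
    ‖mildSolution A f u₀ t‖ ≤ ‖u₀‖ + ∫ r in 0..t, ‖f r‖ :=
  norm_add_le_of_le (norm_propagator_apply_le 0 t u₀)
    (intervalIntegral.norm_integral_le_of_norm_le ht
      (.of_forall fun r _ => norm_propagator_apply_le r t (f r)) hf.norm.intervalIntegrable)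

theorem continuous_mildSolution (hA : Integrable A) (hpos : ∀ r, (A r).PosSemidef)
    (hf : Integrable f) : Continuous (mildSolution A f u₀) := by
  have hcont : ∀ (s : ℝ) (z : LpSpace ι p), Continuous fun t => propagator A s t z := fun s z =>
    (continuous_propagator (p := p) hA hpos).comp (f := fun t => ((s, t), z)) (by fun_prop)
  refine (hcont 0 u₀).add (continuous_iff_continuousAt.2 fun t => ?_)
  have hjoint := intervalIntegral.continuousAt_parametric_primitive_of_dominated (μ := volume)
    (F := fun t r => propagator A r t (f r)) (fun r => ‖f r‖) (-(|t| + 1)) (|t| + 1)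
    (a₀ := 0) (x₀ := t) (b₀ := t)
    (fun t => (integrable_propagator hA hpos hf t).aestronglyMeasurable.restrict)
    (.of_forall fun t => .of_forall fun r => norm_propagator_apply_le r t (f r))
    hf.norm.intervalIntegrable (.of_forall fun r => (hcont r (f r)).continuousAt)
    ⟨by linarith [abs_nonneg t], by linarith [abs_nonneg t]⟩
    ⟨by linarith [neg_abs_le t], by linarith [le_abs_self t]⟩ (by simp)
  exact hjoint.comp (f := fun t : ℝ => (t, t)) (by fun_prop)

theorem exists_abs_integral_pairing_propagator_sub_le (φ : TestFn (ι → ℝ)) :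
    ∃ C ≥ 0, ∀ {A : ℝ → Matrix ι ι ℝ}, Integrable A → (∀ r, (A r).PosSemidef) →
      ∀ {f : ℝ → LpSpace ι p}, Integrable f → ∀ {s t η : ℝ}, s ≤ t → 0 ≤ η →
      ∫ r in s..t, ‖A r‖ ≤ η ^ 2 →
      |pairing φ (∫ r in s..t, propagator A r t (f r)) - ∫ r in s..t, pairing φ (f r)| ≤
        C * η * ∫ r in s..t, ‖f r‖ := by
  obtain ⟨C, hC, hbound⟩ := exists_abs_pairing_propagator_sub_le (p := p) φ
  refine ⟨C, hC, fun {A} hA hpos {f} hf {s t η} hst hη hsmall => ?_⟩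
  have hint := integrable_propagator hA hpos hf t
  rw [← (pairing φ).intervalIntegral_comp_comm hint.intervalIntegrable,
    ← intervalIntegral.integral_sub ((pairing φ).integrable_comp hint).intervalIntegrable
      ((pairing φ).integrable_comp hf).intervalIntegrable,
    ← intervalIntegral.integral_const_mul, ← Real.norm_eq_abs]
  refine intervalIntegral.norm_integral_le_of_norm_le hst (.of_forall fun r hr => ?_)
    (hf.norm.const_mul _).intervalIntegrable
  have htail : ∫ q in r..t, ‖A q‖ ≤ ∫ q in s..t, ‖A q‖ :=
    intervalIntegral.integral_mono_interval hr.1.le hr.2 le_rfl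
      (.of_forall fun q => norm_nonneg (A q)) hA.norm.intervalIntegrable
  exact (hbound hpos hr.2 hη (htail.trans hsmall) (f r)).trans_eq (mul_right_comm _ _ _)

theorem exists_abs_pairing_mildSolution_sub_integral_le (φ : TestFn (ι → ℝ)) :
    ∃ C ≥ 0, ∀ {A : ℝ → Matrix ι ι ℝ}, Integrable A → (∀ r, (A r).PosSemidef) →
      ∀ {f : ℝ → LpSpace ι p}, Integrable f → ∀ {u₀ : LpSpace ι p} {s t η : ℝ}, 0 ≤ s → s ≤ t →
      (∀ r ∈ Icc s t, ‖mildSolution A f u₀ r - mildSolution A f u₀ s‖ ≤ η) →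
      ∫ r in s..t, ‖A r‖ ≤ η ^ 2 →
      |pairing φ (mildSolution A f u₀ t) - pairing φ (mildSolution A f u₀ s)
        - ∫ r in s..t, (hessianPairing φ (A r) (mildSolution A f u₀ r) + pairing φ (f r))| ≤
        C * (1 + ‖mildSolution A f u₀ s‖) * η * ∫ r in s..t, (‖A r‖ + ‖f r‖) := by
  obtain ⟨C, hC, hevol⟩ := exists_abs_pairing_propagator_sub_integral_le (p := p) φ
  obtain ⟨D, hD, hforce⟩ := exists_abs_integral_pairing_propagator_sub_le (p := p) φ
  refine ⟨C + D, by positivity, fun {A} hA hpos {f} hf {u₀ s t η} hs hst hη hsmall => ?_⟩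
  set x := mildSolution A f u₀ with hx
  have hη₀ : 0 ≤ η := (norm_nonneg _).trans (hη s (left_mem_Icc.2 hst))
  have hcont : ContinuousOn x (Icc s t) := (continuous_mildSolution hA hpos hf).continuousOn
  have hm : 0 ≤ ∫ r in s..t, ‖A r‖ :=
    intervalIntegral.integral_nonneg hst fun r _ => norm_nonneg _
  have hn : 0 ≤ ∫ r in s..t, ‖f r‖ :=
    intervalIntegral.integral_nonneg hst fun r _ => norm_nonneg _
  rw [hx, mildSolution_eq_propagator_add hA hpos hf hs hst, ← hx, map_add,
    intervalIntegral.integral_add (intervalIntegrable_hessianPairing hA hst hcont φ)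
      ((pairing φ).integrable_comp hf).intervalIntegrable,
    intervalIntegral.integral_add hA.norm.intervalIntegrable hf.norm.intervalIntegrable]
  set m := ∫ r in s..t, ‖A r‖
  set n := ∫ r in s..t, ‖f r‖
  have hevol := abs_le.1 (hevol hA hpos hst hcont hη hsmall)
  have hforce := abs_le.1 (hforce hA hpos hf hst hη₀ hsmall)
  have hsum : C * (1 + ‖x s‖) * η * m + D * η * n ≤ (C + D) * (1 + ‖x s‖) * η * (m + n) := by
    have : 0 ≤ (C * (1 + ‖x s‖) * n + D * (1 + ‖x s‖) * m + D * ‖x s‖ * n) * η := by positivity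
    linarith
  exact abs_le.2 ⟨by linarith, by linarith⟩

/-- `x` solves `∂_t x = A^{ij}(t) ∂_i ∂_j x + f`, `x(0) = u₀`, on `[0, T]` in the weak sense. -/
def IsDistributionalSolution (A : ℝ → Matrix ι ι ℝ) (f : ℝ → LpSpace ι p) (u₀ : LpSpace ι p)
    (T : ℝ) (x : ℝ → LpSpace ι p) : Prop :=
  ∀ φ : TestFn (ι → ℝ), ∀ t ∈ Icc 0 T, pairing φ (x t) =
    pairing φ u₀ + ∫ r in 0..t, (hessianPairing φ (A r) (x r) + pairing φ (f r))

theorem isDistributionalSolution_mildSolution (hA : Integrable A) (hpos : ∀ r, (A r).PosSemidef)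
    (hf : Integrable f) (T : ℝ) :
    IsDistributionalSolution A f u₀ T (mildSolution A f u₀) := by
  intro φ t ht
  set x := mildSolution A f u₀ with hx_def
  have hx : Continuous x := continuous_mildSolution hA hpos hf
  obtain ⟨C, hC, hbound⟩ := exists_abs_pairing_mildSolution_sub_integral_le (p := p) φ
  obtain ⟨B, hB⟩ := isCompact_Icc.exists_bound_of_continuousOn (hx.continuousOn (s := Icc 0 t))
  set F := fun r => hessianPairing φ (A r) (x r) + pairing φ (f r)
  have hF : ∀ {s t : ℝ}, s ≤ t → IntervalIntegrable F volume s t := fun hst =>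
    intervalIntegrable_hessianPairing_add_pairing hA hf hst hx.continuousOn φ
  have hconst := eq_of_forall_norm_sub_le_mul_intervalIntegral
    (g := fun t => pairing φ (x t) - ∫ r in 0..t, F r) (κ := fun r => ‖A r‖ + ‖f r‖)
    (C := C * (1 + B)) ht.1
    (hA.norm.add hf.norm) fun η hη => ?_
  · rw [intervalIntegral.integral_same, sub_zero, hx_def, mildSolution_zero] at hconst
    exact sub_eq_iff_eq_add.1 hconst
  obtain ⟨δ, hδ, hclose⟩ := exists_pos_forall_norm_sub_le_and_intervalIntegral_le
    (hx.continuousOn (s := Icc 0 t)) hA.norm hη (sq_pos_of_pos hη)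
  refine ⟨δ, hδ, fun s r hs hsr hr hδr => ?_⟩
  obtain ⟨hxη, hAη⟩ := hclose s r hs hsr hr hδr
  rw [← intervalIntegral.integral_add_adjacent_intervals (hF hs) (hF hsr), sub_sub_sub_comm,
    add_sub_cancel_left]
  refine (hbound hA hpos hf hs hsr hxη hAη).trans ?_
  gcongr
  · exact intervalIntegral.integral_nonneg hsr fun q _ => by positivity
  · exact hB s ⟨hs, hsr.trans hr⟩

end MildSolution

section Uniqueness

variable {ι : Type*} [Fintype ι] [DecidableEq ι] {p : ℝ≥0∞} [Fact (1 ≤ p)]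
  {A : ℝ → Matrix ι ι ℝ} {f : ℝ → LpSpace ι p} {u₀ : LpSpace ι p} {T : ℝ} {x x' : ℝ → LpSpace ι p}

theorem hessianPairing_translate (φ : TestFn (ι → ℝ)) (H : Matrix ι ι ℝ) (y : ι → ℝ)
    (z : LpSpace ι p) :
    hessianPairing φ H (translate y z) = hessianPairing (φ.shift y) H z := by
  simp only [hessianPairing_apply, pairing_translate, partialDeriv, TestFn.lineDerivOp_shift]

namespace IsDistributionalSolution

theorem apply_zero_eq (hx : IsDistributionalSolution A f u₀ T x) (hT : 0 ≤ T) : x 0 = u₀ := by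
  refine sub_eq_zero.1 (eq_zero_of_forall_pairing_eq_zero fun φ => ?_)
  rw [map_sub, hx φ 0 ⟨le_rfl, hT⟩, intervalIntegral.integral_same, add_zero, sub_self]

theorem translate (hx : IsDistributionalSolution A f u₀ T x) (y : ι → ℝ) :
    IsDistributionalSolution A (fun t => DegenerateParabolic.translate y (f t))
      (DegenerateParabolic.translate y u₀) T fun t => DegenerateParabolic.translate y (x t) :=
  fun φ t ht => by
    simpa only [pairing_translate, hessianPairing_translate] using hx (φ.shift y) t ht

theorem sub (hA : Integrable A) (hf : Integrable f) (hx : IsDistributionalSolution A f u₀ T x)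
    (hxc : ContinuousOn x (Icc 0 T)) (hx' : IsDistributionalSolution A f u₀ T x')
    (hx'c : ContinuousOn x' (Icc 0 T)) :
    IsDistributionalSolution A 0 0 T (x - x') := fun φ t ht => by
  have hsub : Icc 0 t ⊆ Icc 0 T := Icc_subset_Icc_right ht.2
  have hint := intervalIntegrable_hessianPairing_add_pairing hA hf ht.1 (hxc.mono hsub) φ
  have hint' := intervalIntegrable_hessianPairing_add_pairing hA hf ht.1 (hx'c.mono hsub) φ
  simp only [Pi.sub_apply, Pi.zero_apply, map_sub, map_zero, hx φ t ht, hx' φ t ht,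
    add_sub_add_left_eq_sub, add_zero, zero_add, ← intervalIntegral.integral_sub hint hint',
    add_sub_add_right_eq_sub]

theorem pairing_sub_pairing (hx : IsDistributionalSolution A 0 u₀ T x) (hA : Integrable A)
    (hxc : ContinuousOn x (Icc 0 T)) {s t : ℝ} (hs : 0 ≤ s) (hst : s ≤ t) (ht : t ≤ T)
    (φ : TestFn (ι → ℝ)) :
    pairing φ (x t) - pairing φ (x s) = ∫ r in s..t, hessianPairing φ (A r) (x r) := by
  have hint := intervalIntegrable_hessianPairing_add_pairing hA
    (integrable_zero ℝ (LpSpace ι p) volume) hs (hxc.mono (Icc_subset_Icc_right (hst.trans ht))) φ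
  have hint' := intervalIntegrable_hessianPairing_add_pairing hA
    (integrable_zero ℝ (LpSpace ι p) volume) hst (hxc.mono (Icc_subset_Icc hs ht)) φ
  rw [hx φ t ⟨hs.trans hst, ht⟩, hx φ s ⟨hs, hst.trans ht⟩, add_sub_add_left_eq_sub,
    ← intervalIntegral.integral_add_adjacent_intervals hint hint', add_sub_cancel_left]
  simp only [Pi.zero_apply, map_zero, add_zero]

variable [Fact (p ≠ ∞)]

theorem exists_abs_pairing_translate_sub_propagator_le (φ : TestFn (ι → ℝ)) :
    ∃ C ≥ 0, ∀ {A : ℝ → Matrix ι ι ℝ}, Integrable A → (∀ r, (A r).PosSemidef) →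
      ∀ {u₀ : LpSpace ι p} {T : ℝ} {x : ℝ → LpSpace ι p}, IsDistributionalSolution A 0 u₀ T x →
      ContinuousOn x (Icc 0 T) → ∀ {s t η : ℝ}, 0 ≤ s → s ≤ t → t ≤ T →
      (∀ r ∈ Icc s t, ‖x r - x s‖ ≤ η) → ∫ r in s..t, ‖A r‖ ≤ η ^ 2 → ∀ y : ι → ℝ,
      |pairing φ (DegenerateParabolic.translate y (x t - propagator A s t (x s)))| ≤
        C * (1 + ‖x s‖) * η * ∫ r in s..t, ‖A r‖ := by
  obtain ⟨C, hC, hbound⟩ := exists_abs_pairing_propagator_sub_integral_le (p := p) φ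
  refine ⟨C, hC, fun {A} hA hpos {u₀ T x} hx hxc {s t η} hs hst ht hη hsmall y => ?_⟩
  have hyc := (DegenerateParabolic.translate y).continuous.comp_continuousOn hxc
  have hy : IsDistributionalSolution A 0 (DegenerateParabolic.translate y u₀) T
      fun t => DegenerateParabolic.translate y (x t) := by
    simpa [← Pi.zero_def] using hx.translate y
  have := hbound hA hpos (x := fun t => DegenerateParabolic.translate y (x t)) hst
    (hyc.mono (Icc_subset_Icc hs ht)) (fun r hr => ?_) hsmall
  · rw [← hy.pairing_sub_pairing hA hyc hs hst ht φ, LinearIsometry.norm_map] at this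
    rwa [map_sub, map_sub, translate_propagator, ← abs_neg, neg_sub, ← sub_sub_sub_cancel_right]
  · rw [← map_sub, LinearIsometry.norm_map]
    exact hη r hr

theorem eq_propagator (hx : IsDistributionalSolution A 0 u₀ T x) (hxc : ContinuousOn x (Icc 0 T))
    (hA : Integrable A) (hpos : ∀ r, (A r).PosSemidef) (hT : 0 ≤ T) :
    x T = propagator A 0 T u₀ := by
  refine sub_eq_zero.1 (eq_zero_of_forall_pairing_eq_zero fun φ => ?_)
  obtain ⟨C, hC, hbound⟩ := exists_abs_pairing_translate_sub_propagator_le (p := p) φ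
  obtain ⟨B, hB⟩ := isCompact_Icc.exists_bound_of_continuousOn hxc
  have hconst := eq_of_forall_norm_sub_le_mul_intervalIntegral
    (g := fun s => pairing φ (propagator A s T (x s))) (C := C * (1 + B)) hT hA.norm fun η hη => ?_
  · rw [map_sub, ← hx.apply_zero_eq hT, ← hconst, propagator_self, sub_self]
  obtain ⟨δ, hδ, hclose⟩ := exists_pos_forall_norm_sub_le_and_intervalIntegral_le
    hxc hA.norm hη (sq_pos_of_pos hη)
  refine ⟨δ, hδ, fun s t hs hst ht hδt => ?_⟩
  obtain ⟨hxη, hAη⟩ := hclose s t hs hst ht hδt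
  rw [← propagator_propagator hA hpos hst ht, ← map_sub, ← map_sub]
  refine (norm_map_translationAverage_le _ (pairing φ)
    (hbound hA hpos hx hxc hs hst ht hxη hAη)).trans ?_
  gcongr
  · exact intervalIntegral.integral_nonneg hst fun q _ => norm_nonneg _
  · exact hB s ⟨hs, hst.trans ht⟩

theorem eqOn (hx : IsDistributionalSolution A f u₀ T x) (hxc : ContinuousOn x (Icc 0 T))
    (hx' : IsDistributionalSolution A f u₀ T x') (hx'c : ContinuousOn x' (Icc 0 T))
    (hA : Integrable A) (hpos : ∀ r, (A r).PosSemidef) (hf : Integrable f) :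
    EqOn x x' (Icc 0 T) := fun t ht => by
  have hsub := sub hA hf hx hxc hx' hx'c
  have hsub_t : IsDistributionalSolution A 0 0 t (x - x') := fun φ r hr =>
    hsub φ r ⟨hr.1, hr.2.trans ht.2⟩
  have := hsub_t.eq_propagator ((hxc.sub hx'c).mono (Icc_subset_Icc_right ht.2)) hA hpos ht.1
  exact sub_eq_zero.1 (this.trans (map_zero _))

end IsDistributionalSolution

end Uniqueness

section TimeInterval

variable {d : ℕ} {a : ℝ → Fin d → Fin d → ℝ} {T : ℝ}

theorem abs_le_aMax (a : ℝ → Fin d → Fin d → ℝ) (t : ℝ) (i j : Fin d) : |a t i j| ≤ aMax a t :=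
  (le_ciSup (f := fun j => |a t i j|) (finite_range _).bddAbove j).trans
    (le_ciSup (f := fun i => ⨆ j, |a t i j|) (finite_range _).bddAbove i)

variable {p : ℝ≥0∞} [Fact (1 ≤ p)] {u₀ : LpSpace (Fin d) p} {f u : ℝ → LpSpace (Fin d) p}

theorem hessianPairing_of (φ : TestFn (Fin d → ℝ)) (b : Fin d → Fin d → ℝ)
    (z : LpSpace (Fin d) p) :
    hessianPairing φ (Matrix.of b) z = ∑ i, ∑ j, b i j * ∫ x, z x * pd i (pd j φ) x := by
  have hpd (i : Fin d) (ψ : TestFn (Fin d → ℝ)) : ⇑(partialDeriv i ψ) = pd i ψ :=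
    funext fun x => TestFn.lineDerivOp_apply _ _ x
  simp only [hessianPairing_apply, pairing_apply, hpd, Matrix.of_apply]

theorem isWeakSolution_iff_isDistributionalSolution :
    IsWeakSolution p T a u₀ f u ↔ IsDistributionalSolution
      ((Ioc 0 T).indicator fun t => Matrix.of (a t)) ((Ioc 0 T).indicator f) u₀ T u := by
  have hiff (φ : TestFn (Fin d → ℝ)) : ∀ t ∈ Icc 0 T,
      ((∫ x, u t x * φ x) = (∫ x, u₀ x * φ x) + ∫ s in Ioc (0 : ℝ) t,
        ((∑ i, ∑ j, a s i j * ∫ x, u s x * pd i (pd j φ) x) + ∫ x, f s x * φ x)) ↔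
      pairing φ (u t) = pairing φ u₀ + ∫ s in 0..t,
        (hessianPairing φ ((Ioc 0 T).indicator (fun t => Matrix.of (a t)) s) (u s) +
          pairing φ ((Ioc 0 T).indicator f s)) := fun t ht => by
    rw [intervalIntegral.integral_of_le ht.1, pairing_apply, pairing_apply]
    refine Iff.of_eq (congrArg (_ = _ + ·) (setIntegral_congr_fun measurableSet_Ioc fun s hs => ?_))
    have hsT : s ∈ Ioc 0 T := Ioc_subset_Ioc_right ht.2 hs
    simp only [indicator_of_mem hsT, hessianPairing_of, pairing_apply]
  exact ⟨fun h φ t ht => (hiff φ t ht).1 (h φ φ.contDiff φ.hasCompactSupport t ht),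
    fun h φ hφ hφc t ht => (hiff ⟨φ, hφ, hφc, subset_univ _⟩ t ht).2 (h _ t ht)⟩

end TimeInterval

end DegenerateParabolic

open DegenerateParabolic

open scoped Matrix.Norms.L2Operator in
theorem well_posedness_general {d : ℕ} {p : ℝ≥0∞} [Fact (1 ≤ p)] (hp : p ≠ ∞) {T : ℝ}
    {a : ℝ → Fin d → Fin d → ℝ} (ha : ∀ i j, IntegrableOn (fun t => a t i j) (Ioc 0 T))
    (hpos : ∀ t ∈ Ioc 0 T, (Matrix.of (a t)).PosSemidef)
    (u₀ : LpSpace (Fin d) p) {f : ℝ → LpSpace (Fin d) p}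
    (hf : IntegrableOn f (Ioc 0 T)) :
    ∃ u : ℝ → LpSpace (Fin d) p,
      ContinuousOn u (Icc 0 T) ∧
      IsWeakSolution p T a u₀ f u ∧
      (∀ t ∈ Icc 0 T, ‖u t‖ ≤ ‖u₀‖ + ∫ s in Ioc 0 T, ‖f s‖) ∧
      (∀ v : ℝ → LpSpace (Fin d) p, ContinuousOn v (Icc 0 T) →
        IsWeakSolution p T a u₀ f v → ∀ t ∈ Icc 0 T, v t = u t) := by
  have : Fact (p ≠ ∞) := ⟨hp⟩
  simp only [isWeakSolution_iff_isDistributionalSolution]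
  set A := (Ioc 0 T).indicator fun t => Matrix.of (a t)
  have hA : Integrable A :=
    IntegrableOn.integrable_indicator (integrable_of_forall_integrable_apply ha) measurableSet_Ioc
  have hApos (t : ℝ) : (A t).PosSemidef := by
    by_cases ht : t ∈ Ioc 0 T
    · simpa only [A, indicator_of_mem ht] using hpos t ht
    · simpa only [A, indicator_of_notMem ht] using Matrix.PosSemidef.zero
  have hg : Integrable ((Ioc 0 T).indicator f) := hf.integrable_indicator measurableSet_Ioc
  have hcont := continuous_mildSolution (u₀ := u₀) hA hApos hg
  have hsol := isDistributionalSolution_mildSolution (u₀ := u₀) hA hApos hg T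
  refine ⟨_, hcont.continuousOn, hsol, fun t ht => ?_, fun v hvc hv =>
    hv.eqOn hvc hsol hcont.continuousOn hA hApos hg⟩
  refine (norm_mildSolution_le hg ht.1).trans (add_le_add_right ?_ _)
  calc ∫ r in 0..t, ‖(Ioc 0 T).indicator f r‖ ≤ ∫ r, ‖(Ioc 0 T).indicator f r‖ := by
        rw [intervalIntegral.integral_of_le ht.1]
        exact setIntegral_le_integral hg.norm (.of_forall fun r => norm_nonneg _)
    _ = ∫ s in Ioc 0 T, ‖f s‖ := by
        simp only [norm_indicator_eq_indicator_norm, integral_indicator measurableSet_Ioc]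

/-- Well-posedness: under `∫_0^T |a(t)| dt < ∞` there exists a unique weak solution,
continuous from `[0,T]` into `L_p`, satisfying the a priori estimate with `N = N(p,T)`. -/
theorem well_posedness (p T : ℝ) (hp : 1 < p) (hT : 0 < T)
    [Fact (1 ≤ ENNReal.ofReal p)] :
    ∃ N : ℝ, 0 < N ∧
      ∀ (d : ℕ), 0 < d →
      ∀ (a : ℝ → Fin d → Fin d → ℝ),
        (∀ i j, Measurable fun t => a t i j) →
        (∀ t ∈ Ioc (0:ℝ) T, ∀ i j, a t i j = a t j i) →
        (∀ t ∈ Ioc (0:ℝ) T, ∀ ξ : Fin d → ℝ,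
          0 ≤ ∑ i, ∑ j, a t i j * ξ i * ξ j) →
        IntegrableOn (aMax a) (Ioc (0:ℝ) T) →
      ∀ (u0 : Lp ℝ (ENNReal.ofReal p) (volume : Measure (Fin d → ℝ)))
        (f : ℝ → Lp ℝ (ENNReal.ofReal p) (volume : Measure (Fin d → ℝ))),
        AEStronglyMeasurable f (volume.restrict (Ioc (0:ℝ) T)) →
        IntegrableOn (fun t => ‖f t‖ ^ p) (Ioc (0:ℝ) T) →
        ∃ u : ℝ → Lp ℝ (ENNReal.ofReal p) (volume : Measure (Fin d → ℝ)),
          ContinuousOn u (Icc (0:ℝ) T) ∧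
          IsWeakSolution (ENNReal.ofReal p) T a u0 f u ∧
          (∀ t ∈ Icc (0:ℝ) T,
            ‖u t‖ ^ p ≤ N * (‖u0‖ ^ p + ∫ s in Ioc (0:ℝ) T, ‖f s‖ ^ p)) ∧
          (∀ v : ℝ → Lp ℝ (ENNReal.ofReal p) (volume : Measure (Fin d → ℝ)),
            ContinuousOn v (Icc (0:ℝ) T) →
            IsWeakSolution (ENNReal.ofReal p) T a u0 f v →
            ∀ t ∈ Icc (0:ℝ) T, v t = u t) := by
  refine ⟨2 ^ (p - 1) * max 1 (T ^ (p - 1)), by positivity,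
    fun d _ a ham hsymm hpos haT u0 f hf hfp => ?_⟩
  have ha (i j : Fin d) : IntegrableOn (fun t => a t i j) (Ioc 0 T) :=
    haT.mono' (ham i j).aestronglyMeasurable (.of_forall fun t => abs_le_aMax a t i j)
  obtain ⟨u, hcont, hsol, hnorm, huniq⟩ := well_posedness_general ofReal_ne_top ha
    (fun t ht => posSemidef_of_sum_mul_mul_nonneg (hsymm t ht) (hpos t ht)) u0
    (integrable_of_integrable_norm_rpow hp.le hf hfp)
  refine ⟨u, hcont, hsol, fun t ht => ?_, huniq⟩
  calc ‖u t‖ ^ p ≤ (‖u0‖ + ∫ s in Ioc 0 T, ‖f s‖) ^ p := by gcongr; exact hnorm t ht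
    _ ≤ 2 ^ (p - 1) * max 1 (T ^ (p - 1)) * (‖u0‖ ^ p + ∫ s in Ioc 0 T, ‖f s‖ ^ p) := by
      simpa [hT.le] using add_integral_norm_rpow_le hp.le hf hfp (norm_nonneg u0)

end
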